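/- Let φ be a Schur function with φ(0) = 0 such that C_φ is a compact operator on 𝒟_*. Then for every A > 0, sup_{ξ∈T} (1/A[W(ξ,h)]) ∫_{W(ξ,h)} N_φ(w) dA(w) = o(h^A) as h → 0⁺. -/

import Mathlib

/-!
The evaluation functional of `𝒟_*` at `a` is represented by the kernel `k_a = -log (1 - ā w)`,
with `‖k_a‖² = -log (1 - |a|²)`, and the normalized kernels tend weakly to `0` at the boundary.
Composition sends evaluation at `z` to evaluation at `φ z`, so for a compact `C_φ` the ratio
`‖k_{φ z}‖ / ‖k_z‖` tends to `0` as `|φ z| → 1` (`key_log`). Exponentiating the logarithms,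
for every `M` there is `ρ < 1` such that `1 - |z|² ≤ (1 - |φ z|²) ^ M` whenever `|φ z| > ρ`
(`exists_rho`). Compactness enters through the approximation numbers: if `C_φ - R` has small norm
and `R` has finite rank, then `ker R` contains a good approximant `v` of `k_{φ z}`
(`exists_in_ker`), and `v (φ z) = (C_φ v) z = ((C_φ - R) v) z` is bounded by a small multiple of
`‖v‖ ‖k_z‖`, while `v (φ z)` is comparable to `‖k_{φ z}‖²`. Working in coordinates, `𝒟_*` is
identified with `ℓ²` by means of Parseval's identity on the disk (`lintegral_disk`, `toFn_norm`,
`exists_coeff`).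

On a window of size `h`, every term of the counting function is therefore at most `(2h) ^ M`.
The number of preimages integrates to at most `∫_D |φ'|² dA = ‖φ‖²`, by change of variables on
countably many sets of injectivity (`lintegral_nevanlinna_le`), and this is finite since
`φ = C_φ (id)`. A window has area at least `h² / 16` (`nA_carlesonW_ge`), so taking `M = A + 3`
bounds the mean over the window by a constant times `h ^ (A + 1)`.
-/

open Complex MeasureTheory Metric Set Filter Topology
open scoped ENNReal NNReal

noncomputable section

/-- Normalized area measure `dA = dx dy / π` on `ℂ`. -/
def nA : Measure ℂ := (ENNReal.ofReal Real.pi)⁻¹ • volume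

/-- The open unit disk `D ⊆ ℂ`. -/
def uD : Set ℂ := Metric.ball (0 : ℂ) 1

/-- A Schur function: an analytic self-map of the open unit disk. -/
def IsSchur (φ : ℂ → ℂ) : Prop :=
  DifferentiableOn ℂ φ uD ∧ Set.MapsTo φ uD uD

/-- Squared norm of `f` in the weighted Dirichlet space `𝒟_α`, with value in `[0,∞]`:
`‖f‖_α² = |f(0)|² + (α+1) ∫_D |f′(z)|² (1−|z|²)^α dA(z)`. -/
def eDNormSqW (α : ℝ) (f : ℂ → ℂ) : ℝ≥0∞ :=
  ENNReal.ofReal (‖f 0‖ ^ 2) +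
    ∫⁻ z in uD, ENNReal.ofReal ((α + 1) * ‖deriv f z‖ ^ 2 * (1 - ‖z‖ ^ 2) ^ α) ∂nA

/-- Squared Dirichlet norm: `‖f‖² = |f(0)|² + ∫_D |f′(z)|² dA(z)`. -/
def eDNormSq (f : ℂ → ℂ) : ℝ≥0∞ := eDNormSqW 0 f

/-- Membership in the weighted Dirichlet space `𝒟_α`. -/
def MemDW (α : ℝ) (f : ℂ → ℂ) : Prop :=
  DifferentiableOn ℂ f uD ∧ eDNormSqW α f < ⊤

/-- Membership in `𝒟_{α,*}`. -/
def MemDWStar (α : ℝ) (f : ℂ → ℂ) : Prop := MemDW α f ∧ f 0 = 0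

/-- Membership in the Dirichlet space `𝒟`. -/
def MemD (f : ℂ → ℂ) : Prop := MemDW 0 f

/-- Membership in `𝒟_*`. -/
def MemDStar (f : ℂ → ℂ) : Prop := MemDWStar 0 f

/-- The composition operator `C_φ f = f ∘ φ`. -/
def compOp (φ : ℂ → ℂ) : (ℂ → ℂ) → ℂ → ℂ := fun f z => f (φ z)

/-- Operator norm of `T` with respect to the space `{f | Mem f}` with squared norm `NSq`:
the least `C` such that `‖T f‖² ≤ C² ‖f‖²` for all `f` in the space (`⊤` if none). -/
def eOpNorm (Mem : (ℂ → ℂ) → Prop) (NSq : (ℂ → ℂ) → ℝ≥0∞)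
    (T : (ℂ → ℂ) → ℂ → ℂ) : ℝ≥0∞ :=
  sInf {C : ℝ≥0∞ | ∀ f, Mem f → NSq (T f) ≤ C ^ 2 * NSq f}

/-- The `n`-th approximation number `a_n(T) = inf {‖T − R‖ : rank R < n}`. -/
def eApproxNum (Mem : (ℂ → ℂ) → Prop) (NSq : (ℂ → ℂ) → ℝ≥0∞)
    (T : (ℂ → ℂ) → ℂ → ℂ) (n : ℕ) : ℝ≥0∞ :=
  sInf {c : ℝ≥0∞ | ∃ R : (ℂ → ℂ) →ₗ[ℂ] (ℂ → ℂ),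
    Module.rank ℂ (LinearMap.range R) < (n : Cardinal) ∧
    c = eOpNorm Mem NSq (fun f z => T f z - R f z)}

/-- `T` is a bounded operator on the space `{f | Mem f}` with squared norm `NSq`. -/
def IsBoundedOpOn (Mem : (ℂ → ℂ) → Prop) (NSq : (ℂ → ℂ) → ℝ≥0∞)
    (T : (ℂ → ℂ) → ℂ → ℂ) : Prop :=
  (∀ f, Mem f → Mem (T f)) ∧ eOpNorm Mem NSq T ≠ ⊤

/-- `T` is a compact operator on the space `{f | Mem f}`: it is bounded and its
approximation numbers tend to `0` (the standard characterization of compactness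
for operators on a Hilbert space). -/
def IsCompactOpOn (Mem : (ℂ → ℂ) → Prop) (NSq : (ℂ → ℂ) → ℝ≥0∞)
    (T : (ℂ → ℂ) → ℂ → ℂ) : Prop :=
  IsBoundedOpOn Mem NSq T ∧
    Filter.Tendsto (fun n => eApproxNum Mem NSq T n) Filter.atTop (𝓝 0)

/-- `T` belongs to the Schatten class `S_p` of the space `{f | Mem f}`:
`Σ_{n≥1} a_n(T)^p < ∞`. -/
def MemSchattenOn (Mem : (ℂ → ℂ) → Prop) (NSq : (ℂ → ℂ) → ℝ≥0∞)
    (T : (ℂ → ℂ) → ℂ → ℂ) (p : ℝ) : Prop :=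
  IsBoundedOpOn Mem NSq T ∧
    ∑' n : ℕ, (eApproxNum Mem NSq T (n + 1)) ^ p ≠ ⊤

/-- `C_φ` belongs to the Schatten class `S_p(𝒟_*)`. -/
def MemSchattenD (p : ℝ) (φ : ℂ → ℂ) : Prop :=
  MemSchattenOn MemDStar eDNormSq (compOp φ) p

/-- `C_φ` is a Hilbert–Schmidt operator on `𝒟_*`: it is bounded and
`Σ_n ‖C_φ e_n‖² < ∞` for the orthonormal basis `e_n(z) = zⁿ/√n`, `n ≥ 1`, of `𝒟_*`
(equivalently, for every orthonormal basis). -/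
def HilbertSchmidtOnDStar (φ : ℂ → ℂ) : Prop :=
  IsBoundedOpOn MemDStar eDNormSq (compOp φ) ∧
    ∑' n : ℕ, eDNormSq (fun z => φ z ^ (n + 1) / (Real.sqrt (n + 1) : ℂ)) ≠ ⊤

/-- Squared Hardy norm `‖f‖² = sup_{0≤r<1} (1/2π) ∫_0^{2π} |f(r e^{it})|² dt`. -/
def eHardyNormSq (f : ℂ → ℂ) : ℝ≥0∞ :=
  ⨆ r : Set.Ico (0 : ℝ) 1,
    (∫⁻ t in Set.Ioc 0 (2 * Real.pi),
      ENNReal.ofReal (‖f ((r : ℝ) * Complex.exp (t * Complex.I))‖ ^ 2)) /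
        ENNReal.ofReal (2 * Real.pi)

/-- Membership in the Hardy space `H²`. -/
def MemHardy (f : ℂ → ℂ) : Prop := DifferentiableOn ℂ f uD ∧ eHardyNormSq f < ⊤

/-- Squared Bergman norm `‖f‖² = ∫_D |f|² dA`. -/
def eBergNormSq (f : ℂ → ℂ) : ℝ≥0∞ := ∫⁻ z in uD, ENNReal.ofReal (‖f z‖ ^ 2) ∂nA

/-- Membership in the Bergman space `𝔅²`. -/
def MemBerg (f : ℂ → ℂ) : Prop := DifferentiableOn ℂ f uD ∧ eBergNormSq f < ⊤

/-- The logarithmic energy `I_μ = ∬ log(e/|z−w|) dμ(z) dμ(w)` of a measure on the circle. -/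
def eEnergy (μ : Measure ℂ) : ℝ≥0∞ :=
  ∫⁻ z, ∫⁻ w, ENNReal.ofReal (Real.log (Real.exp 1 / dist z w)) ∂μ ∂μ

/-- A Borel set `E` (contained in the unit circle) has logarithmic capacity zero iff
`I_μ = ∞` for every Borel probability measure `μ` with compact support contained in `E`. -/
def HasLogCapacityZero (E : Set ℂ) : Prop :=
  ∀ μ : Measure ℂ, IsProbabilityMeasure μ →
    (∃ K, IsCompact K ∧ K ⊆ E ∧ μ Kᶜ = 0) → eEnergy μ = ⊤

/-- The weighted Nevanlinna counting function `N_{φ,α}(w) = Σ_{z∈D, φ(z)=w} (1−|z|²)^α`. -/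
def nevanlinnaE (φ : ℂ → ℂ) (α : ℝ) (w : ℂ) : ℝ≥0∞ :=
  ∑' z : {z : ℂ // z ∈ uD ∧ φ z = w}, ENNReal.ofReal ((1 - ‖(z : ℂ)‖ ^ 2) ^ α)

/-- The Carleson window `W(ξ,h)`. -/
def carlesonW (ξ : ℂ) (h : ℝ) : Set ℂ :=
  {w ∈ uD | 1 - ‖w‖ ≤ h ∧ |Complex.arg (w * (starRingEnd ℂ) ξ)| ≤ Real.pi * h}

/-- Argument normalized to lie in `[0, 2π)`. -/
def argNN (z : ℂ) : ℝ :=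
  if 0 ≤ Complex.arg z then Complex.arg z else Complex.arg z + 2 * Real.pi

/-- The Hastings–Luecking window `R_{n,j}`. -/
def HLwindow (n j : ℕ) : Set ℂ :=
  {z ∈ uD | 1 - ((2 : ℝ) ^ n)⁻¹ ≤ ‖z‖ ∧ ‖z‖ < 1 - ((2 : ℝ) ^ (n + 1))⁻¹ ∧
    2 * j * Real.pi / 2 ^ n ≤ argNN z ∧ argNN z < 2 * (j + 1) * Real.pi / 2 ^ n}

/-- `g` is an a.e. radial limit function of `φ`:
for a.e. `t`, `φ(r e^{it}) → g(t)` as `r → 1⁻`. -/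
def IsRadialLimit (φ : ℂ → ℂ) (g : ℝ → ℂ) : Prop :=
  ∀ᵐ t : ℝ, Filter.Tendsto (fun r : ℝ => φ ((r : ℂ) * Complex.exp (t * Complex.I)))
    (𝓝[<] (1 : ℝ)) (𝓝 (g t))


/-! ### Parseval's identity on circles and on the disk -/

/-- Parseval's identity on a circle of absolute convergence, obtained from the polynomial case by
dominated convergence. -/
lemma hasSum_circle (b : ℕ → ℂ) (r : ℝ) (hr : 0 ≤ r) (hb : Summable fun n => ‖b n‖ * r ^ n) :
    HasSum (fun n => ‖b n‖ ^ 2 * r ^ (2 * n))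
      ((2 * Real.pi)⁻¹ * ∫ θ in (-Real.pi)..Real.pi,
        ‖∑' n, b n * ((r : ℂ) * Complex.exp (θ * I)) ^ n‖ ^ 2) := by
  have hnorm : ∀ (θ : ℝ) (n : ℕ), ‖b n * ((r : ℂ) * Complex.exp (θ * I)) ^ n‖ = ‖b n‖ * r ^ n := by
    intro θ n
    simp [Complex.norm_exp_ofReal_mul_I, abs_of_nonneg hr]
  have hsum : ∀ θ : ℝ, Summable fun n => b n * ((r : ℂ) * Complex.exp (θ * I)) ^ n := fun θ =>
    Summable.of_norm (by simpa only [hnorm] using hb)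
  have hpoly : ∀ N : ℕ, ∑ n ∈ Finset.range N, ‖b n‖ ^ 2 * r ^ (2 * n) =
      (2 * Real.pi)⁻¹ * ∫ θ in (-Real.pi)..Real.pi,
        ‖∑ n ∈ Finset.range N, b n * ((r : ℂ) * Complex.exp (θ * I)) ^ n‖ ^ 2 := by
    intro N
    set p : Polynomial ℂ := ∑ n ∈ Finset.range N, Polynomial.monomial n (b n * (r : ℂ) ^ n) with hp
    have hcoeff : ∀ i, p.coeff i = if i ∈ Finset.range N then b i * (r : ℂ) ^ i else 0 := by
      intro i
      simp [hp, Polynomial.finsetSum_coeff, Polynomial.coeff_monomial]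
    have h1 := p.sum_sq_norm_coeff_eq_circleAverage
    rw [Real.circleAverage_eq_integral_add (-Real.pi),
      intervalIntegral.integral_comp_add_right
        (fun θ => ‖Polynomial.eval (circleMap 0 1 θ) p‖ ^ 2) (-Real.pi)] at h1
    have h2 : ∑ i ∈ p.support, ‖p.coeff i‖ ^ 2 =
        ∑ n ∈ Finset.range N, ‖b n‖ ^ 2 * r ^ (2 * n) := by
      rw [Finset.sum_subset (s₂ := Finset.range N)]
      · refine Finset.sum_congr rfl fun i hi => ?_
        rw [hcoeff, if_pos hi, norm_mul, norm_pow, Complex.norm_real, Real.norm_of_nonneg hr]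
        ring
      · intro i hi
        by_contra hn
        rw [Polynomial.mem_support_iff, hcoeff, if_neg hn] at hi
        exact hi rfl
      · intro i _ hi
        rw [Polynomial.notMem_support_iff.mp hi]
        simp
    rw [← h2, h1, smul_eq_mul]
    have h3 : 2 * Real.pi + -Real.pi = Real.pi := by ring
    rw [h3, zero_add]
    congr 2
    · ext θ
      congr 2
      simp only [hp, Polynomial.eval_finsetSum, Polynomial.eval_monomial, circleMap]
      refine Finset.sum_congr rfl fun n _ => ?_
      simp only [ofReal_one, one_mul, zero_add]
      ring
  have hs : Summable fun n => ‖b n‖ ^ 2 * r ^ (2 * n) := by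
    have h2 : Summable fun n => (‖b n‖ * r ^ n) ^ 2 := by
      obtain ⟨C, hC⟩ := hb.tendsto_atTop_zero.bddAbove_range
      refine Summable.of_nonneg_of_le (fun n => by positivity) (fun n => ?_) (hb.mul_left C)
      rw [sq]
      exact mul_le_mul_of_nonneg_right (hC ⟨n, rfl⟩) (by positivity)
    refine h2.congr fun n => by ring
  rw [hs.hasSum_iff_tendsto_nat]
  simp_rw [hpoly]
  refine Tendsto.const_mul _ ?_
  refine intervalIntegral.tendsto_integral_filter_of_dominated_convergence
    (fun _ => (∑' n, ‖b n‖ * r ^ n) ^ 2) ?_ ?_ ?_ ?_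
  · refine Eventually.of_forall fun N => Continuous.aestronglyMeasurable ?_
    fun_prop
  · refine Eventually.of_forall fun N => Eventually.of_forall fun θ _ => ?_
    rw [Real.norm_of_nonneg (by positivity)]
    gcongr
    refine (norm_sum_le _ _).trans ?_
    simp only [hnorm]
    exact hb.sum_le_tsum _ (fun n _ => by positivity)
  · exact intervalIntegrable_const
  · refine Eventually.of_forall fun θ _ => ?_
    exact ((hsum θ).hasSum.tendsto_sum_nat.norm).pow 2

lemma continuousOn_powerSeries (b : ℕ → ℂ)
    (hb : ∀ r : ℝ, 0 ≤ r → r < 1 → Summable fun n => ‖b n‖ * r ^ n) :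
    ContinuousOn (fun z => ∑' n, b n * z ^ n) uD := by
  intro z hz
  have hz1 : ‖z‖ < 1 := by simpa [uD] using hz
  obtain ⟨r, h1, h2⟩ := exists_between hz1
  have h0 : 0 ≤ r := (norm_nonneg z).trans h1.le
  refine ContinuousAt.continuousWithinAt ?_
  have : ContinuousOn (fun z => ∑' n, b n * z ^ n) (ball 0 r) := by
    refine continuousOn_tsum (fun n => by fun_prop) (hb r h0 h2) fun n w hw => ?_
    rw [norm_mul, norm_pow]
    have : ‖w‖ ≤ r := by simpa using (mem_ball_zero_iff.mp hw).le
    gcongr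
  exact this.continuousAt (isOpen_ball.mem_nhds (by simpa using h1))

lemma lintegral_circle (b : ℕ → ℂ) (r : ℝ) (hr : 0 ≤ r) (hb : Summable fun n => ‖b n‖ * r ^ n) :
    ∫⁻ θ in Ioo (-Real.pi) Real.pi,
        ENNReal.ofReal (‖∑' n, b n * ((r : ℂ) * Complex.exp (θ * I)) ^ n‖ ^ 2) =
      ENNReal.ofReal (2 * Real.pi) * ∑' n, ENNReal.ofReal (‖b n‖ ^ 2 * r ^ (2 * n)) := by
  have h := hasSum_circle b r hr hb
  have hpi := Real.pi_pos
  have hcont : Continuous fun θ : ℝ =>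
      ‖∑' n, b n * ((r : ℂ) * Complex.exp (θ * I)) ^ n‖ ^ 2 := by
    refine (Continuous.norm ?_).pow 2
    refine continuous_tsum (fun n => by fun_prop) hb fun n θ => ?_
    simp [Complex.norm_exp_ofReal_mul_I, abs_of_nonneg hr]
  rw [← ENNReal.ofReal_tsum_of_nonneg (fun n => by positivity) h.summable, h.tsum_eq,
    ← ENNReal.ofReal_mul (by positivity), ← mul_assoc, mul_inv_cancel₀ (by positivity), one_mul,
    intervalIntegral.integral_of_le (by linarith), restrict_Ioo_eq_restrict_Ioc,
    ofReal_integral_eq_lintegral_ofReal]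
  · exact (hcont.integrableOn_Icc).mono_set Ioc_subset_Icc_self
  · exact Eventually.of_forall fun θ => by positivity

lemma lintegral_radius (n : ℕ) (c : ℝ) (hc : 0 ≤ c) :
    ∫⁻ r in Ioo (0 : ℝ) 1, ENNReal.ofReal r * ENNReal.ofReal (c * r ^ (2 * n)) =
      ENNReal.ofReal (c / (2 * (n + 1))) := by
  have : ∫ r in (0 : ℝ)..1, c * r ^ (2 * n + 1) = c / (2 * (n + 1)) := by
    rw [intervalIntegral.integral_const_mul, integral_pow]
    push_cast
    field_simp
    ring
  rw [← this, intervalIntegral.integral_of_le zero_le_one, restrict_Ioo_eq_restrict_Ioc,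
    ofReal_integral_eq_lintegral_ofReal]
  · refine setLIntegral_congr_fun measurableSet_Ioc fun r hr => ?_
    rw [← ENNReal.ofReal_mul hr.1.le]
    congr 1
    ring
  · exact (Continuous.integrableOn_Icc (by fun_prop)).mono_set Ioc_subset_Icc_self
  · refine (ae_restrict_iff' measurableSet_Ioc).mpr (Eventually.of_forall fun r hr => ?_)
    have := hr.1.le
    simp only [Pi.zero_apply]
    positivity

/-- Parseval's identity on the disk: `∫_D |∑ bₙ zⁿ|² dA = ∑ |bₙ|² / (n + 1)`. -/
lemma lintegral_disk (b : ℕ → ℂ)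
    (hb : ∀ r : ℝ, 0 ≤ r → r < 1 → Summable fun n => ‖b n‖ * r ^ n) :
    ∫⁻ z in uD, ENNReal.ofReal (‖∑' n, b n * z ^ n‖ ^ 2) ∂nA =
      ∑' n : ℕ, ENNReal.ofReal (‖b n‖ ^ 2 / (n + 1)) := by
  have hpi := Real.pi_pos
  have hmeas : MeasurableSet uD := measurableSet_ball
  set G : ℂ → ℝ≥0∞ := uD.indicator fun z => ENNReal.ofReal (‖∑' n, b n * z ^ n‖ ^ 2) with hG
  have hGm : Measurable G := by
    have : Measurable (uD.indicator fun z => ∑' n, b n * z ^ n) :=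
      by
        classical
        rw [← piecewise_eq_indicator]
        exact (continuousOn_powerSeries b hb).measurable_piecewise continuousOn_const hmeas
    have h2 : G = fun z => ENNReal.ofReal
        (‖uD.indicator (fun z => ∑' n, b n * z ^ n) z‖ ^ 2) := by
      ext z
      by_cases hz : z ∈ uD <;> simp [hG, hz]
    rw [h2]
    fun_prop
  rw [nA, Measure.restrict_smul, lintegral_smul_measure, ← lintegral_indicator hmeas, ← hG,
    ← Complex.lintegral_comp_polarCoord_symm]
  have key : ∫⁻ p in polarCoord.target, ENNReal.ofReal p.1 • G (Complex.polarCoord.symm p) =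
      ∫⁻ r in Ioi (0 : ℝ), ENNReal.ofReal r *
        ∫⁻ θ in Ioo (-Real.pi) Real.pi, G ((r : ℂ) * Complex.exp (θ * I)) := by
    rw [polarCoord_target, Measure.volume_eq_prod, ← Measure.prod_restrict, lintegral_prod]
    · refine lintegral_congr fun r => ?_
      rw [← lintegral_const_mul]
      · refine lintegral_congr fun θ => ?_
        rw [Complex.polarCoord_symm_apply, smul_eq_mul, Complex.exp_mul_I]
        simp
      · exact hGm.comp (by fun_prop)
    · refine Measurable.aemeasurable ?_
      simp only [smul_eq_mul, Complex.polarCoord_symm_apply]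
      refine Measurable.mul (by fun_prop) (hGm.comp (by fun_prop))
  have hin : ∀ r ∈ Ioi (0 : ℝ), ENNReal.ofReal r *
        ∫⁻ θ in Ioo (-Real.pi) Real.pi, G ((r : ℂ) * Complex.exp (θ * I)) =
      (Ioo (0 : ℝ) 1).indicator (fun r => ENNReal.ofReal (2 * Real.pi) *
        ∑' n, ENNReal.ofReal r * ENNReal.ofReal (‖b n‖ ^ 2 * r ^ (2 * n))) r := by
    intro r hr
    have hr0 : 0 < r := hr
    have hn : ∀ θ : ℝ, ‖(r : ℂ) * Complex.exp (θ * I)‖ = r := fun θ => by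
      simp [Complex.norm_exp_ofReal_mul_I, abs_of_pos hr0]
    by_cases h1 : r < 1
    · rw [indicator_of_mem (show r ∈ Ioo (0 : ℝ) 1 from ⟨hr0, h1⟩)]
      have : ∀ θ : ℝ, G ((r : ℂ) * Complex.exp (θ * I)) =
          ENNReal.ofReal (‖∑' n, b n * ((r : ℂ) * Complex.exp (θ * I)) ^ n‖ ^ 2) := fun θ =>
        indicator_of_mem (show _ ∈ uD by rw [uD, mem_ball_zero_iff, hn]; exact h1) _
      simp_rw [this]
      rw [lintegral_circle b r hr0.le (hb r hr0.le h1), ENNReal.tsum_mul_left, mul_left_comm]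
    · rw [indicator_of_notMem (fun h => h1 h.2)]
      have : ∀ θ : ℝ, G ((r : ℂ) * Complex.exp (θ * I)) = 0 := fun θ =>
        indicator_of_notMem (show _ ∉ uD by rw [uD, mem_ball_zero_iff, hn]; exact h1) _
      simp_rw [this]
      simp
  rw [key, setLIntegral_congr_fun measurableSet_Ioi hin, lintegral_indicator measurableSet_Ioo,
    Measure.restrict_restrict measurableSet_Ioo,
    inter_eq_self_of_subset_left (Ioo_subset_Ioi_self : Ioo (0 : ℝ) 1 ⊆ Ioi 0),
    lintegral_const_mul _ (by fun_prop), lintegral_tsum (fun n => by fun_prop)]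
  simp_rw [lintegral_radius _ _ (sq_nonneg ‖b _‖)]
  rw [smul_eq_mul, ← mul_assoc, ← ENNReal.ofReal_inv_of_pos hpi,
    ← ENNReal.ofReal_mul (by positivity), ← ENNReal.tsum_mul_left]
  refine tsum_congr fun n => ?_
  rw [← ENNReal.ofReal_mul (by positivity)]
  congr 1
  field_simp

/-! ### The Dirichlet space as a space of power series -/

/-- Termwise differentiation of the primitive of a power series with radius of convergence at
least `1`. -/
lemma hasDerivAt_primitive (b : ℕ → ℂ)
    (hb : ∀ r : ℝ, 0 ≤ r → r < 1 → Summable fun n => ‖b n‖ * r ^ n) {z : ℂ} (hz : z ∈ uD) :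
    HasDerivAt (fun z => ∑' n : ℕ, b n * z ^ (n + 1) / (n + 1)) (∑' n, b n * z ^ n) z := by
  have hz1 : ‖z‖ < 1 := by simpa [uD] using hz
  obtain ⟨r, h1, h2⟩ := exists_between hz1
  have h0 : 0 ≤ r := (norm_nonneg z).trans h1.le
  have h0' : 0 < r := (norm_nonneg z).trans_lt h1
  refine hasDerivAt_tsum_of_isPreconnected (t := ball (0 : ℂ) r) (y₀ := 0)
    (g := fun (n : ℕ) (z : ℂ) => b n * z ^ (n + 1) / (n + 1)) (g' := fun n z => b n * z ^ n)
    (hb r h0 h2) isOpen_ball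
    (convex_ball _ _).isPreconnected (fun n y _ => ?_) (fun n y hy => ?_) (by simpa using h0')
    ?_ (by simpa using h1)
  · have h := ((hasDerivAt_pow (n + 1) y).const_mul (b n)).div_const ((n : ℂ) + 1)
    have hne : (n : ℂ) + 1 ≠ 0 := Nat.cast_add_one_ne_zero n
    refine h.congr_deriv ?_
    rw [Nat.add_sub_cancel]
    push_cast
    field_simp
  · rw [norm_mul, norm_pow]
    have : ‖y‖ ≤ r := (mem_ball_zero_iff.mp hy).le
    gcongr
  · simp

lemma eDNormSq_eq (f : ℂ → ℂ) (h0 : f 0 = 0) :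
    eDNormSq f = ∫⁻ z in uD, ENNReal.ofReal (‖deriv f z‖ ^ 2) ∂nA := by
  simp [eDNormSq, eDNormSqW, h0]

lemma isOpen_uD : IsOpen uD := isOpen_ball

lemma zero_mem_uD : (0 : ℂ) ∈ uD := by simp [uD]

/-- If `f = ∑ bₙ zⁿ⁺¹ / (n + 1)` on the disk, then `f` is analytic with `f 0 = 0` and
`‖f‖² = ∑ |bₙ|² / (n + 1)`. -/
lemma dirichlet_of_series (b : ℕ → ℂ)
    (hb : ∀ r : ℝ, 0 ≤ r → r < 1 → Summable fun n => ‖b n‖ * r ^ n) (f : ℂ → ℂ)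
    (hf : ∀ z ∈ uD, f z = ∑' n : ℕ, b n * z ^ (n + 1) / (n + 1)) :
    DifferentiableOn ℂ f uD ∧ f 0 = 0 ∧
      eDNormSq f = ∑' n : ℕ, ENNReal.ofReal (‖b n‖ ^ 2 / (n + 1)) := by
  have hd : ∀ z ∈ uD, HasDerivAt f (∑' n, b n * z ^ n) z := fun z hz =>
    (hasDerivAt_primitive b hb hz).congr_of_eventuallyEq
      (Filter.eventuallyEq_of_mem (isOpen_uD.mem_nhds hz) hf)
  have h0 : f 0 = 0 := by rw [hf 0 zero_mem_uD]; simp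
  refine ⟨fun z hz => (hd z hz).differentiableAt.differentiableWithinAt, h0, ?_⟩
  rw [eDNormSq_eq f h0, ← lintegral_disk b hb]
  refine setLIntegral_congr_fun isOpen_uD.measurableSet fun z hz => ?_
  simp only [(hd z hz).deriv]

/-- The coefficient space `ℓ²`: the sequence `c` stands for the function
`∑ cₙ zⁿ⁺¹ / √(n + 1)` of `𝒟_*`. -/
abbrev L2 : Type := lp (fun _ : ℕ => ℂ) 2

lemma sqrt_ne (n : ℕ) : ((Real.sqrt (n + 1) : ℝ) : ℂ) ≠ 0 := by
  have : 0 < Real.sqrt (n + 1) := Real.sqrt_pos.mpr (by positivity)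
  exact_mod_cast this.ne'

lemma sqrt_mul_self' (n : ℕ) :
    ((Real.sqrt (n + 1) : ℝ) : ℂ) * ((Real.sqrt (n + 1) : ℝ) : ℂ) = n + 1 := by
  rw [← Complex.ofReal_mul, Real.mul_self_sqrt (by positivity)]
  push_cast
  rfl

lemma norm_kern_term (a : ℂ) (n : ℕ) :
    ‖(starRingEnd ℂ a) ^ (n + 1) / ((Real.sqrt (n + 1) : ℝ) : ℂ)‖ ^ 2 =
      (‖a‖ ^ 2) ^ (n + 1) / (n + 1) := by
  rw [norm_div, norm_pow, Complex.norm_conj, Complex.norm_real, div_pow,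
    Real.norm_of_nonneg (Real.sqrt_nonneg _), Real.sq_sqrt (by positivity)]
  ring

lemma hasSum_kern (a : ℂ) (ha : ‖a‖ < 1) :
    HasSum (fun n : ℕ => ‖(starRingEnd ℂ a) ^ (n + 1) / ((Real.sqrt (n + 1) : ℝ) : ℂ)‖ ^ 2)
      (-Real.log (1 - ‖a‖ ^ 2)) := by
  simp_rw [norm_kern_term]
  refine Real.hasSum_pow_div_log_of_abs_lt_one ?_
  rw [abs_of_nonneg (by positivity)]
  exact pow_lt_one₀ (norm_nonneg a) ha two_ne_zero

lemma memℓp_of_summable_sq (c : ℕ → ℂ) (h : Summable fun n => ‖c n‖ ^ 2) : Memℓp c 2 := by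
  refine memℓp_gen ?_
  simpa using h

open Classical in
/-- Coefficients of the reproducing kernel `w ↦ -log (1 - ā w)` of `𝒟_*` at the point `a` of
the disk; `0` for `a` outside the disk. -/
def kern (a : ℂ) : L2 :=
  if ha : ‖a‖ < 1 then
    ⟨fun n => (starRingEnd ℂ a) ^ (n + 1) / ((Real.sqrt (n + 1) : ℝ) : ℂ),
      memℓp_of_summable_sq _ (hasSum_kern a ha).summable⟩
  else 0

lemma kern_apply {a : ℂ} (ha : ‖a‖ < 1) (n : ℕ) :
    (kern a : ∀ _ : ℕ, ℂ) n = (starRingEnd ℂ a) ^ (n + 1) / ((Real.sqrt (n + 1) : ℝ) : ℂ) := by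
  rw [kern, dif_pos ha]

lemma hasSum_norm_sq (c : L2) : HasSum (fun n => ‖c n‖ ^ 2) (‖c‖ ^ 2) := by
  have := lp.hasSum_norm (p := 2) (by norm_num) c
  simpa using this

lemma norm_sq_kern {a : ℂ} (ha : ‖a‖ < 1) : ‖kern a‖ ^ 2 = -Real.log (1 - ‖a‖ ^ 2) := by
  refine (hasSum_norm_sq (kern a)).unique ?_
  simp_rw [kern_apply ha]
  exact hasSum_kern a ha

/-- The linear map sending a coefficient sequence to the function of `𝒟_*` it represents,
extended by `0` outside the disk. -/
def toFn : L2 →ₗ[ℂ] (ℂ → ℂ) where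
  toFun c w := inner ℂ (kern w) c
  map_add' c d := by ext w; simp
  map_smul' t c := by ext w; simp

lemma toFn_apply (c : L2) {w : ℂ} (hw : ‖w‖ < 1) :
    toFn c w = ∑' n : ℕ, (c n * ((Real.sqrt (n + 1) : ℝ) : ℂ)) * w ^ (n + 1) / (n + 1) := by
  change inner ℂ (kern w) c = _
  rw [lp.inner_eq_tsum]
  refine tsum_congr fun n => ?_
  rw [kern_apply hw]
  have h1 := sqrt_ne n
  have h2 := sqrt_mul_self' n
  simp only [RCLike.inner_apply, map_div₀, map_pow, Complex.conj_conj, Complex.conj_ofReal]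
  rw [← h2]
  field_simp

lemma summable_coeff (c : L2) (r : ℝ) (h0 : 0 ≤ r) (h1 : r < 1) :
    Summable fun n : ℕ => ‖c n * ((Real.sqrt (n + 1) : ℝ) : ℂ)‖ * r ^ n := by
  have hs : Summable fun n : ℕ => ‖c‖ * (((n : ℝ) + 1) * r ^ n) := by
    refine Summable.mul_left _ ?_
    have ha := summable_pow_mul_geometric_of_norm_lt_one (R := ℝ) 1 (r := r)
      (by rwa [Real.norm_of_nonneg h0])
    have hb := summable_geometric_of_lt_one h0 h1
    refine (ha.add hb).congr fun n => by ring
  refine Summable.of_nonneg_of_le (fun n => by positivity) (fun n => ?_) hs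
  rw [norm_mul, Complex.norm_real, Real.norm_of_nonneg (Real.sqrt_nonneg _), mul_assoc]
  have h2 : ‖c n‖ ≤ ‖c‖ := lp.norm_apply_le_norm (by norm_num) c n
  have h3 : Real.sqrt (n + 1) ≤ n + 1 := by
    rw [Real.sqrt_le_left (by positivity)]
    nlinarith [(Nat.cast_nonneg n : (0 : ℝ) ≤ n)]
  gcongr

lemma norm_sq_coeff (c : L2) (n : ℕ) :
    ‖c n * ((Real.sqrt (n + 1) : ℝ) : ℂ)‖ ^ 2 / (n + 1) = ‖c n‖ ^ 2 := by
  rw [norm_mul, Complex.norm_real, Real.norm_of_nonneg (Real.sqrt_nonneg _), mul_pow,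
    Real.sq_sqrt (by positivity)]
  field_simp

lemma tsum_norm_sq (c : L2) :
    ∑' n : ℕ, ENNReal.ofReal (‖c n‖ ^ 2) = ENNReal.ofReal (‖c‖ ^ 2) := by
  rw [← ENNReal.ofReal_tsum_of_nonneg (fun n => by positivity) (hasSum_norm_sq c).summable,
    (hasSum_norm_sq c).tsum_eq]

lemma toFn_norm (c : L2) :
    DifferentiableOn ℂ (toFn c) uD ∧ toFn c 0 = 0 ∧
      eDNormSq (toFn c) = ENNReal.ofReal (‖c‖ ^ 2) := by
  have h := dirichlet_of_series _ (summable_coeff c) (toFn c) fun z hz =>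
    toFn_apply c (by simpa [uD] using hz)
  simp_rw [norm_sq_coeff, tsum_norm_sq] at h
  exact h

lemma toFn_mem (c : L2) : MemDStar (toFn c) := by
  obtain ⟨h1, h2, h3⟩ := toFn_norm c
  refine ⟨⟨h1, ?_⟩, h2⟩
  change eDNormSq (toFn c) < ⊤
  rw [h3]
  exact ENNReal.ofReal_lt_top

/-- Every function of `𝒟_*` is represented by an `ℓ²` sequence of the same norm. -/
lemma exists_coeff (f : ℂ → ℂ) (hf : MemDStar f) :
    ∃ c : L2, (∀ z ∈ uD, f z = toFn c z) ∧ eDNormSq f = ENNReal.ofReal (‖c‖ ^ 2) := by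
  obtain ⟨⟨hd, hfin⟩, h0⟩ := hf
  have hd' : DifferentiableOn ℂ (deriv f) uD := hd.deriv isOpen_uD
  set b : ℕ → ℂ := fun n => ((n.factorial : ℂ))⁻¹ * iteratedDeriv n (deriv f) 0 with hbdef
  have hT : ∀ z ∈ uD, HasSum (fun n => b n * z ^ n) (deriv f z) := by
    intro z hz
    have := Complex.hasSum_taylorSeries_on_ball (f := deriv f) (c := 0) (r := 1) hd' hz
    refine this.congr_fun fun n => ?_
    simp only [hbdef, sub_zero, smul_eq_mul]
    ring
  have hb : ∀ r : ℝ, 0 ≤ r → r < 1 → Summable fun n => ‖b n‖ * r ^ n := by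
    intro r hr0 hr1
    have := (hT (r : ℂ) (by simpa [uD, abs_of_nonneg hr0] using hr1)).summable.norm
    simpa [abs_of_nonneg hr0] using this
  have hser : ∀ z ∈ uD, f z = ∑' n : ℕ, b n * z ^ (n + 1) / (n + 1) := by
    have hS := fun z (hz : z ∈ uD) => hasDerivAt_primitive b hb hz
    refine isOpen_uD.eqOn_of_deriv_eq (convex_ball _ _).isPreconnected hd
      (fun z hz => (hS z hz).differentiableAt.differentiableWithinAt) (fun z hz => ?_)
      zero_mem_uD ?_
    · rw [(hS z hz).deriv, (hT z hz).tsum_eq]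
    · simp [h0]
  obtain ⟨-, -, hN⟩ := dirichlet_of_series b hb f hser
  have hnb : ∀ n : ℕ, ‖b n / ((Real.sqrt (n + 1) : ℝ) : ℂ)‖ ^ 2 = ‖b n‖ ^ 2 / (n + 1) := by
    intro n
    rw [norm_div, Complex.norm_real, Real.norm_of_nonneg (Real.sqrt_nonneg _), div_pow,
      Real.sq_sqrt (by positivity)]
  have hsum : Summable fun n : ℕ => ‖b n / ((Real.sqrt (n + 1) : ℝ) : ℂ)‖ ^ 2 := by
    simp_rw [hnb]
    have hne : ∑' n : ℕ, ENNReal.ofReal (‖b n‖ ^ 2 / (n + 1)) ≠ ⊤ := by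
      rw [← hN]; exact hfin.ne
    have := ENNReal.summable_toReal hne
    refine this.congr fun n => ENNReal.toReal_ofReal (by positivity)
  refine ⟨⟨fun n => b n / ((Real.sqrt (n + 1) : ℝ) : ℂ), memℓp_of_summable_sq _ hsum⟩, ?_, ?_⟩
  · intro z hz
    rw [toFn_apply _ (by simpa [uD] using hz), hser z hz]
    refine tsum_congr fun n => ?_
    rw [div_mul_cancel₀ _ (sqrt_ne n)]
  · rw [← tsum_norm_sq, hN]
    exact tsum_congr fun n => by rw [← hnb]

/-! ### Compactness forces fast boundary approach -/

/-- The filter of points of the disk whose modulus tends to `1`. -/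
def bd : Filter ℂ := Filter.comap (fun a : ℂ => ‖a‖) (𝓝[<] (1 : ℝ))

lemma eventually_bd_lt : ∀ᶠ a in bd, ‖a‖ < 1 :=
  Filter.tendsto_comap.eventually self_mem_nhdsWithin

lemma tendsto_norm_kern : Tendsto (fun a => ‖kern a‖) bd atTop := by
  have h1 : Tendsto (fun t : ℝ => 1 - t ^ 2) (𝓝[<] 1) (𝓝[>] 0) := by
    refine tendsto_nhdsWithin_iff.mpr ⟨?_, ?_⟩
    · have : Tendsto (fun t : ℝ => 1 - t ^ 2) (𝓝 1) (𝓝 (1 - 1 ^ 2)) :=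
        Continuous.tendsto (by fun_prop) 1
      simp only [one_pow, sub_self] at this
      exact this.mono_left nhdsWithin_le_nhds
    · have h0 : ∀ᶠ t : ℝ in 𝓝[<] 1, 0 < t :=
        mem_nhdsWithin_of_mem_nhds (Ioi_mem_nhds zero_lt_one)
      filter_upwards [self_mem_nhdsWithin, h0] with t ht ht0
      have ht' : t < 1 := ht
      change 0 < 1 - t ^ 2
      nlinarith
  have h2 : Tendsto (fun t : ℝ => Real.sqrt (-Real.log (1 - t ^ 2))) (𝓝[<] 1) atTop :=
    Real.tendsto_sqrt_atTop.comp
      (tendsto_neg_atBot_atTop.comp (Real.tendsto_log_nhdsGT_zero.comp h1))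
  refine (h2.comp Filter.tendsto_comap).congr' ?_
  filter_upwards [eventually_bd_lt] with a ha
  change Real.sqrt (-Real.log (1 - ‖a‖ ^ 2)) = ‖kern a‖
  rw [← norm_sq_kern ha, Real.sqrt_sq (norm_nonneg _)]

/-- The normalized kernels tend weakly to `0` at the boundary: finitely many coefficients of
`kern a` stay bounded while `‖kern a‖` tends to infinity. -/
lemma weakly_null (u : L2) {ε : ℝ} (hε : 0 < ε) :
    ∀ᶠ a in bd, ‖inner ℂ u (kern a)‖ ≤ ε * ‖kern a‖ := by
  have hs := lp.hasSum_single (p := 2) (by norm_num) u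
  obtain ⟨s, hs⟩ := (hs.eventually (Metric.ball_mem_nhds u (half_pos hε))).exists
  set v : L2 := ∑ n ∈ s, lp.single 2 n (u n) with hv
  have hdist : ‖u - v‖ ≤ ε / 2 := by
    rw [← dist_eq_norm, dist_comm]
    exact (mem_ball.mp hs).le
  filter_upwards [eventually_bd_lt,
    tendsto_norm_kern.eventually_ge_atTop ((∑ n ∈ s, ‖u n‖) / (ε / 2))] with a ha hbig
  have h1 : ‖inner ℂ v (kern a)‖ ≤ ∑ n ∈ s, ‖u n‖ := by
    rw [hv, sum_inner]
    refine (norm_sum_le _ _).trans (Finset.sum_le_sum fun n _ => ?_)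
    rw [lp.inner_single_left]
    refine (norm_inner_le_norm _ _).trans ?_
    refine mul_le_of_le_one_right (norm_nonneg _) ?_
    have hsq := norm_kern_term a n
    rw [← kern_apply ha n] at hsq
    have : (‖a‖ ^ 2) ^ (n + 1) / ((n : ℝ) + 1) ≤ 1 := by
      rw [div_le_one (by positivity)]
      have h3 : (‖a‖ ^ 2) ^ (n + 1) ≤ 1 :=
        pow_le_one₀ (by positivity) (pow_le_one₀ (norm_nonneg _) ha.le)
      linarith [(Nat.cast_nonneg n : (0 : ℝ) ≤ n)]
    rw [← hsq] at this
    exact (sq_le_one_iff₀ (norm_nonneg _)).mp this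
  have h2 : ‖inner ℂ (u - v) (kern a)‖ ≤ ε / 2 * ‖kern a‖ :=
    (norm_inner_le_norm _ _).trans (by gcongr)
  have h3 : ∑ n ∈ s, ‖u n‖ ≤ ε / 2 * ‖kern a‖ := by
    rw [div_le_iff₀ (by positivity)] at hbig
    linarith
  have h4 : inner ℂ u (kern a) = inner ℂ (u - v) (kern a) + inner ℂ v (kern a) := by
    rw [← inner_add_left, sub_add_cancel]
  rw [h4]
  refine (norm_add_le _ _).trans ?_
  linarith

lemma projection_small (F : Submodule ℂ L2) [FiniteDimensional ℂ F] {ε : ℝ} (hε : 0 < ε) :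
    ∀ᶠ a in bd, ‖F.starProjection (kern a)‖ ≤ ε * ‖kern a‖ := by
  set B := stdOrthonormalBasis ℂ F
  have hall : ∀ᶠ a in bd, ∀ i, ‖inner ℂ (B i : L2) (kern a)‖ ≤
      ε / (Module.finrank ℂ F + 1) * ‖kern a‖ :=
    eventually_all.mpr fun i => weakly_null _ (by positivity)
  filter_upwards [hall] with a ha
  rw [B.starProjection_eq_sum_rankOne]
  simp only [_root_.sum_apply, InnerProductSpace.rankOne_apply]
  refine (norm_sum_le _ _).trans ?_
  have : ∀ i ∈ Finset.univ, ‖inner ℂ (B i : L2) (kern a) • (B i : L2)‖ ≤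
      ε / (Module.finrank ℂ F + 1) * ‖kern a‖ := by
    intro i _
    have hone : ‖(B i : L2)‖ = 1 := B.orthonormal.1 i
    rw [norm_smul, hone, mul_one]
    exact ha i
  refine (Finset.sum_le_card_nsmul _ _ _ this).trans ?_
  rw [Finset.card_univ, Fintype.card_fin, nsmul_eq_mul, ← mul_assoc]
  refine mul_le_mul_of_nonneg_right ?_ (norm_nonneg _)
  have h2 : (0 : ℝ) ≤ (Module.finrank ℂ F : ℝ) := Nat.cast_nonneg _
  rw [mul_div_assoc', div_le_iff₀ (by positivity)]
  nlinarith

/-- The kernel of a finite rank map on `ℓ²`, although not necessarily closed, contains good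
approximants of all kernels `kern a` with `a` close to the boundary. -/
lemma exists_in_ker (T : L2 →ₗ[ℂ] (ℂ → ℂ)) (hT : FiniteDimensional ℂ (LinearMap.range T)) :
    ∀ᶠ a in bd, ∃ v ∈ LinearMap.ker T, ‖kern a - v‖ ≤ ‖kern a‖ / 2 := by
  set V := LinearMap.ker T
  -- `T` is injective on the orthogonal complement of its kernel, which is thus finite dimensional.
  have hfin : FiniteDimensional ℂ Vᗮ := by
    refine Module.Finite.of_injective (T.rangeRestrict.comp Vᗮ.subtype) ?_
    rw [← LinearMap.ker_eq_bot, LinearMap.ker_eq_bot']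
    intro m hm
    have h1 : T m = 0 := congrArg Subtype.val hm
    have h2 : (m : L2) ∈ V := h1
    have h3 := m.2 m h2
    exact Subtype.ext (inner_self_eq_zero.mp h3)
  filter_upwards [projection_small Vᗮ (ε := 1 / 4) (by norm_num),
    tendsto_norm_kern.eventually_ge_atTop 1] with a ha h1
  have hy : kern a - Vᗮ.starProjection (kern a) ∈ V.topologicalClosure := by
    rw [← Submodule.orthogonal_orthogonal_eq_closure]
    exact Submodule.sub_starProjection_mem_orthogonal _
  obtain ⟨v, hv, hdist⟩ := Metric.mem_closure_iff.mp hy (‖kern a‖ / 4) (by linarith)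
  refine ⟨v, hv, ?_⟩
  rw [dist_eq_norm] at hdist
  have h2 : kern a - v =
      Vᗮ.starProjection (kern a) + (kern a - Vᗮ.starProjection (kern a) - v) := by abel
  rw [h2]
  refine (norm_add_le _ _).trans ?_
  linarith

/-- Comparing the kernels at `φ z` and at `z`: for a compact `C_φ`,
`log 1/(1 - |φ z|²) = o(log 1/(1 - |z|²))` as `|φ z| → 1`. -/
lemma key_log (φ : ℂ → ℂ) (hc : IsCompactOpOn MemDStar eDNormSq (compOp φ)) {δ : ℝ}
    (hδ : 0 < δ) : ∀ᶠ a in bd, ∀ z ∈ uD, φ z = a →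
      -Real.log (1 - ‖a‖ ^ 2) ≤ δ * -Real.log (1 - ‖z‖ ^ 2) := by
  set s : ℝ := Real.sqrt δ / 4 with hs
  have hs0 : 0 < s := by positivity
  have hs2 : 16 * s ^ 2 = δ := by
    rw [hs, div_pow, Real.sq_sqrt hδ.le]; ring
  obtain ⟨n, hn⟩ := (hc.2.eventually
    (gt_mem_nhds (show (0 : ℝ≥0∞) < ENNReal.ofReal s from ENNReal.ofReal_pos.mpr hs0))).exists
  obtain ⟨c, ⟨R, hR, rfl⟩, hlt⟩ := sInf_lt_iff.mp hn
  obtain ⟨C, hC, hClt⟩ := sInf_lt_iff.mp hlt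
  have hfin : FiniteDimensional ℂ (LinearMap.range (R ∘ₗ toFn)) := by
    have hRfin : FiniteDimensional ℂ (LinearMap.range R) :=
      Module.rank_lt_aleph0_iff.mp (hR.trans (Cardinal.natCast_lt_aleph0))
    exact Submodule.finiteDimensional_of_le (LinearMap.range_comp_le_range toFn R)
  filter_upwards [exists_in_ker _ hfin, eventually_bd_lt,
    tendsto_norm_kern.eventually_ge_atTop 1] with a ⟨v, hv, hva⟩ ha h1 z hz hza
  have hRv : R (toFn v) = 0 := hv
  have hzn : ‖z‖ < 1 := by simpa [uD] using hz
  have hbound := hC (toFn v) (toFn_mem v)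
  simp only [hRv, Pi.zero_apply, sub_zero] at hbound
  obtain ⟨d, hd, hdn⟩ := exists_coeff _ (hc.1.1 _ (toFn_mem v))
  have hdv : ‖d‖ ≤ s * ‖v‖ := by
    have h2 : ENNReal.ofReal (‖d‖ ^ 2) ≤ ENNReal.ofReal ((s * ‖v‖) ^ 2) := by
      rw [← hdn]
      refine hbound.trans ?_
      rw [(toFn_norm v).2.2, mul_pow, ENNReal.ofReal_mul (by positivity),
        ENNReal.ofReal_pow hs0.le]
      gcongr
    rw [ENNReal.ofReal_le_ofReal_iff (by positivity)] at h2
    exact le_of_sq_le_sq h2 (by positivity)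
  have hval : inner ℂ (kern a) v = inner ℂ (kern z) d := by
    rw [← hza]
    exact hd z hz
  have hlow : ‖kern a‖ ^ 2 / 2 ≤ ‖inner ℂ (kern a) v‖ := by
    have h2 : inner ℂ (kern a) v = inner ℂ (kern a) (kern a) - inner ℂ (kern a) (kern a - v) := by
      rw [← inner_sub_right, sub_sub_cancel]
    have h3 : ‖inner ℂ (kern a) (kern a - v)‖ ≤ ‖kern a‖ * (‖kern a‖ / 2) :=
      (norm_inner_le_norm _ _).trans (by gcongr)
    have h4 : ‖inner ℂ (kern a) (kern a)‖ = ‖kern a‖ ^ 2 := by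
      rw [inner_self_eq_norm_sq_to_K]
      simp
    have h5 := norm_sub_norm_le (inner ℂ (kern a) (kern a)) (inner ℂ (kern a) (kern a - v))
    rw [h2]
    nlinarith
  have hup : ‖inner ℂ (kern a) v‖ ≤ ‖kern z‖ * ‖d‖ := by
    rw [hval]
    exact norm_inner_le_norm _ _
  have hvn : ‖v‖ ≤ 2 * ‖kern a‖ := by
    have h2 : v = kern a - (kern a - v) := by abel
    have h3 := norm_sub_le (kern a) (kern a - v)
    rw [← h2] at h3
    linarith
  have hfinal : ‖kern a‖ ≤ 4 * s * ‖kern z‖ := by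
    have h2 : ‖kern z‖ * ‖d‖ ≤ ‖kern z‖ * (s * (2 * ‖kern a‖)) := by
      gcongr
      exact hdv.trans (by gcongr)
    have h3 : ‖kern a‖ * ‖kern a‖ ≤ (4 * s * ‖kern z‖) * ‖kern a‖ := by nlinarith
    exact le_of_mul_le_mul_right h3 (by linarith)
  rw [← norm_sq_kern ha, ← norm_sq_kern hzn, ← hs2]
  have := pow_le_pow_left₀ (norm_nonneg _) hfinal 2
  nlinarith

/-! ### Area formula for the counting function -/

/-- The real Jacobian of a holomorphic map is `‖φ'‖²`. -/
lemma abs_det_deriv (c : ℂ) :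
    |((ContinuousLinearMap.toSpanSingleton ℂ c).restrictScalars ℝ : ℂ →L[ℝ] ℂ).det| =
      ‖c‖ ^ 2 := by
  have : ((ContinuousLinearMap.toSpanSingleton ℂ c).restrictScalars ℝ : ℂ →L[ℝ] ℂ).det =
      Complex.normSq c := by
    simp [ContinuousLinearMap.det, LinearMap.det_restrictScalars, Algebra.norm_complex_apply]
  rw [this, abs_of_nonneg (Complex.normSq_nonneg _), Complex.normSq_eq_norm_sq]

lemma hasFDerivAt_real {φ : ℂ → ℂ} (hφ : DifferentiableOn ℂ φ uD) {z : ℂ} (hz : z ∈ uD) :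
    HasFDerivAt φ ((ContinuousLinearMap.toSpanSingleton ℂ (deriv φ z)).restrictScalars ℝ) z :=
  ((hφ.differentiableAt (isOpen_uD.mem_nhds hz)).hasDerivAt.hasFDerivAt).restrictScalars ℝ

lemma nA_image_le {φ : ℂ → ℂ} (hφ : DifferentiableOn ℂ φ uD) {E : Set ℂ}
    (hE : MeasurableSet E) (hEU : E ⊆ uD) :
    nA (φ '' E) ≤ ∫⁻ z in E, ENNReal.ofReal (‖deriv φ z‖ ^ 2) ∂nA := by
  have h := addHaar_image_le_lintegral_abs_det_fderiv volume hE
    (fun x hx => (hasFDerivAt_real hφ (hEU hx)).hasFDerivWithinAt (s := E))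
  simp only [abs_det_deriv] at h
  simp only [nA, Measure.smul_apply, Measure.restrict_smul, lintegral_smul_measure, smul_eq_mul]
  gcongr

lemma exists_injOn_nhds {φ : ℂ → ℂ} (hφ : DifferentiableOn ℂ φ uD) {z : ℂ} (hz : z ∈ uD)
    (hd : deriv φ z ≠ 0) : ∃ O : Set ℂ, IsOpen O ∧ z ∈ O ∧ InjOn φ O := by
  have h1 : HasStrictDerivAt φ (deriv φ z) z :=
    (hφ.analyticAt (isOpen_uD.mem_nhds hz)).hasStrictDerivAt
  have h2 := h1.hasStrictFDerivAt_equiv hd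
  refine ⟨(h2.toOpenPartialHomeomorph φ).source, (h2.toOpenPartialHomeomorph φ).open_source,
    h2.mem_toOpenPartialHomeomorph_source, ?_⟩
  exact (h2.toOpenPartialHomeomorph φ).injOn

/-- Away from its critical points, a holomorphic function is injective on each piece of some
countable measurable partition. -/
lemma exists_partition {φ : ℂ → ℂ} (hφ : DifferentiableOn ℂ φ uD) :
    ∃ E : ℕ → Set ℂ, (∀ n, MeasurableSet (E n)) ∧ (∀ n, E n ⊆ uD) ∧
      Pairwise (Function.onFun Disjoint E) ∧ (∀ n, InjOn φ (E n)) ∧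
      ∀ z ∈ uD, deriv φ z ≠ 0 → ∃ n, z ∈ E n := by
  have hch : ∀ z : ℂ, ∃ O : Set ℂ, IsOpen O ∧ InjOn φ O ∧
      (z ∈ uD ∩ {z | deriv φ z ≠ 0} → z ∈ O) := by
    intro z
    by_cases hz : z ∈ uD ∩ {z | deriv φ z ≠ 0}
    · obtain ⟨O, h1, h2, h3⟩ := exists_injOn_nhds hφ hz.1 hz.2
      exact ⟨O, h1, h3, fun _ => h2⟩
    · exact ⟨∅, isOpen_empty, injOn_empty _, fun h => absurd h hz⟩
  choose O hO hinj hmem using hch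
  obtain ⟨t, -, htc, htU⟩ := TopologicalSpace.countable_cover_nhdsWithin (f := O)
    (s := uD ∩ {z | deriv φ z ≠ 0})
    (fun x hx => mem_nhdsWithin_of_mem_nhds ((hO x).mem_nhds (hmem x hx)))
  obtain ⟨x, hx⟩ := (htc.insert 0).exists_eq_range (insert_nonempty 0 t)
  refine ⟨fun n => disjointed (fun n => O (x n)) n ∩ uD, ?_, ?_, ?_, ?_, ?_⟩
  · intro n
    exact (MeasurableSet.disjointed (fun i => (hO (x i)).measurableSet) n).inter
      isOpen_uD.measurableSet
  · exact fun n => inter_subset_right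
  · intro i j hij
    exact (disjoint_disjointed (fun n => O (x n)) hij).mono inter_subset_left inter_subset_left
  · intro n
    exact (hinj (x n)).mono (inter_subset_left.trans (disjointed_subset _ n))
  · intro z hz hd
    obtain ⟨y, hy, hzy⟩ := mem_iUnion₂.1 (htU ⟨hz, hd⟩)
    have hy2 : y ∈ range x := hx ▸ mem_insert_of_mem 0 hy
    obtain ⟨n, rfl⟩ := hy2
    have : z ∈ ⋃ n, disjointed (fun n => O (x n)) n := by
      rw [iUnion_disjointed]
      exact mem_iUnion.2 ⟨n, hzy⟩
    obtain ⟨m, hm⟩ := mem_iUnion.1 this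
    exact ⟨m, hm, hz⟩

/-- If `1 - ‖z‖² ≤ s` at every `z` that `φ` maps to `W`, the integral of the counting function
over `W` is at most `s` times the Dirichlet integral of `φ`: the number of preimages integrates
to at most `∫ ‖φ'‖²`, and critical values form a null set. -/
lemma lintegral_nevanlinna_le {φ : ℂ → ℂ} (hφ : DifferentiableOn ℂ φ uD) {W : Set ℂ}
    (hW : MeasurableSet W) (s : ℝ≥0∞)
    (hs : ∀ z ∈ uD, φ z ∈ W → ENNReal.ofReal ((1 - ‖z‖ ^ 2) ^ (1 : ℝ)) ≤ s) :
    ∫⁻ w in W, nevanlinnaE φ 1 w ∂nA ≤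
      s * ∫⁻ z in uD, ENNReal.ofReal (‖deriv φ z‖ ^ 2) ∂nA := by
  obtain ⟨E, hEm, hEU, hEd, hEi, hEc⟩ := exists_partition hφ
  have himg : ∀ n, MeasurableSet (φ '' E n) := fun n =>
    measurable_image_of_fderivWithin (hEm n)
      (fun x hx => (hasFDerivAt_real hφ (hEU n hx)).hasFDerivWithinAt) (hEi n)
  have hcrit : nA (φ '' (uD ∩ {z | deriv φ z = 0})) = 0 := by
    have : volume (φ '' (uD ∩ {z | deriv φ z = 0})) = 0 := by
      refine addHaar_image_eq_zero_of_det_fderivWithin_eq_zero volume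
        (fun x hx => (hasFDerivAt_real hφ hx.1).hasFDerivWithinAt) ?_
      intro x hx
      have h := abs_det_deriv (deriv φ x)
      rw [show deriv φ x = 0 from hx.2, norm_zero, zero_pow two_ne_zero, abs_eq_zero] at h
      rwa [show deriv φ x = 0 from hx.2]
    simp [nA, this]
  have hpt : ∀ w ∈ W, w ∉ φ '' (uD ∩ {z | deriv φ z = 0}) →
      nevanlinnaE φ 1 w ≤ ∑' n, (φ '' E n).indicator (fun _ => s) w := by
    intro w hw hwc
    have hex : ∀ z : {z : ℂ // z ∈ uD ∧ φ z = w}, ∃ n, (z : ℂ) ∈ E n := by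
      intro z
      refine hEc z z.2.1 fun hd => hwc ⟨z, ⟨z.2.1, hd⟩, z.2.2⟩
    choose N hN using hex
    have hNi : Function.Injective N := by
      intro z z' hzz
      have h' := hN z'
      rw [← hzz] at h'
      exact Subtype.ext (hEi _ (hN z) h' (z.2.2.trans z'.2.2.symm))
    refine le_trans (ENNReal.tsum_le_tsum fun z => ?_)
      (ENNReal.tsum_comp_le_tsum_of_injective hNi
        (fun n => (φ '' E n).indicator (fun _ => s) w))
    have hmem : w ∈ φ '' E (N z) := ⟨z, hN z, z.2.2⟩
    simp only [indicator_of_mem hmem]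
    exact hs z z.2.1 (by rw [z.2.2]; exact hw)
  calc ∫⁻ w in W, nevanlinnaE φ 1 w ∂nA
      ≤ ∫⁻ w in W, ∑' n, (φ '' E n).indicator (fun _ => s) w ∂nA := by
        refine lintegral_mono_ae ?_
        have h1 : ∀ᵐ w ∂(nA.restrict W), w ∉ φ '' (uD ∩ {z | deriv φ z = 0}) :=
          ae_restrict_of_ae (measure_eq_zero_iff_ae_notMem.1 hcrit)
        filter_upwards [h1, ae_restrict_mem hW] with w hw hwW
        exact hpt w hwW hw
    _ ≤ ∫⁻ w, ∑' n, (φ '' E n).indicator (fun _ => s) w ∂nA := setLIntegral_le_lintegral _ _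
    _ = ∑' n, s * nA (φ '' E n) := by
        rw [lintegral_tsum fun n => (measurable_const.indicator (himg n)).aemeasurable]
        simp only [lintegral_indicator_const (himg _)]
    _ ≤ ∑' n, s * ∫⁻ z in E n, ENNReal.ofReal (‖deriv φ z‖ ^ 2) ∂nA := by
        gcongr with n
        exact nA_image_le hφ (hEm n) (hEU n)
    _ = s * ∫⁻ z in ⋃ n, E n, ENNReal.ofReal (‖deriv φ z‖ ^ 2) ∂nA := by
        rw [ENNReal.tsum_mul_left, lintegral_iUnion hEm hEd]
    _ ≤ _ := by
        gcongr
        exact iUnion_subset hEU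

/-! ### Carleson windows -/

lemma measurableSet_carlesonW (ξ : ℂ) (h : ℝ) : MeasurableSet (carlesonW ξ h) := by
  have h1 : MeasurableSet {w : ℂ | 1 - ‖w‖ ≤ h} :=
    measurableSet_le (by fun_prop) measurable_const
  have h2 : MeasurableSet {w : ℂ | |Complex.arg (w * (starRingEnd ℂ) ξ)| ≤ Real.pi * h} := by
    refine measurableSet_le ?_ measurable_const
    have : Measurable fun w : ℂ => Complex.arg (w * (starRingEnd ℂ) ξ) :=
      Complex.measurable_arg.comp (measurable_id.mul_const _)
    exact this.abs
  exact isOpen_uD.measurableSet.inter (h1.inter h2)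

lemma abs_arg_le {z : ℂ} {t : ℝ} (hre : 1 / 2 ≤ z.re) (him : |z.im| ≤ t) :
    |Complex.arg z| ≤ Real.pi * t := by
  have ht : 0 ≤ t := (abs_nonneg _).trans him
  have hn : 1 / 2 ≤ ‖z‖ := hre.trans (Complex.re_le_norm z)
  have hsin := Real.mul_abs_le_abs_sin (x := Complex.arg z)
    (Complex.abs_arg_le_pi_div_two_iff.2 (by linarith))
  rw [Complex.sin_arg, abs_div, abs_of_pos (by linarith : 0 < ‖z‖)] at hsin
  have h3 : |z.im| / ‖z‖ ≤ 2 * t := by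
    rw [div_le_iff₀ (by linarith)]
    nlinarith
  have h4 : 2 / Real.pi * |Complex.arg z| ≤ 2 * t := hsin.trans h3
  have hpi := Real.pi_pos
  rw [div_mul_eq_mul_div, div_le_iff₀ hpi] at h4
  linarith

lemma nA_carlesonW_ge {ξ : ℂ} (hξ : ‖ξ‖ = 1) {h : ℝ} (hh : 0 < h) (hh2 : h ≤ 1 / 2) :
    ENNReal.ofReal (h ^ 2 / 16) ≤ nA (carlesonW ξ h) := by
  have hsub : Metric.ball (((1 - h / 2 : ℝ) : ℂ) * ξ) (h / 4) ⊆ carlesonW ξ h := by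
    intro w hw
    rw [mem_ball, dist_eq_norm] at hw
    have hc : ‖((1 - h / 2 : ℝ) : ℂ) * ξ‖ = 1 - h / 2 := by
      rw [norm_mul, hξ, mul_one, Complex.norm_real, Real.norm_of_nonneg (by linarith)]
    have hab := abs_le.1 ((abs_norm_sub_norm_le w (((1 - h / 2 : ℝ) : ℂ) * ξ)).trans hw.le)
    rw [hc] at hab
    refine ⟨?_, by linarith [hab.1], ?_⟩
    · rw [uD, mem_ball, dist_zero_right]
      linarith [hab.2]
    · -- rotate the window to `ξ = 1`
      have hrot : ‖w * (starRingEnd ℂ) ξ - ((1 - h / 2 : ℝ) : ℂ)‖ < h / 4 := by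
        have h1 : ξ * (starRingEnd ℂ) ξ = 1 := by
          rw [Complex.mul_conj, Complex.normSq_eq_norm_sq, hξ]; simp
        have : w * (starRingEnd ℂ) ξ - ((1 - h / 2 : ℝ) : ℂ) =
            (w - ((1 - h / 2 : ℝ) : ℂ) * ξ) * (starRingEnd ℂ) ξ := by
          rw [sub_mul, mul_assoc _ ξ, h1, mul_one]
        rw [this, norm_mul, RCLike.norm_conj, hξ, mul_one]
        exact hw
      have hre := abs_le.1 ((Complex.abs_re_le_norm _).trans hrot.le)
      have him := (Complex.abs_im_le_norm _).trans hrot.le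
      rw [Complex.sub_re, Complex.ofReal_re] at hre
      rw [Complex.sub_im, Complex.ofReal_im, sub_zero] at him
      exact abs_arg_le (by linarith [hre.1]) (by linarith)
  refine le_trans ?_ (measure_mono hsub)
  rw [nA, Measure.smul_apply, Complex.volume_ball, smul_eq_mul, mul_comm,  mul_assoc]
  have hpi : (NNReal.pi : ℝ≥0∞) * (ENNReal.ofReal Real.pi)⁻¹ = 1 := by
    have : (NNReal.pi : ℝ≥0∞) = ENNReal.ofReal Real.pi := by
      rw [← NNReal.coe_real_pi, ENNReal.ofReal_coe_nnreal]
    rw [this]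
    exact ENNReal.mul_inv_cancel (by simp [Real.pi_pos]) ENNReal.ofReal_ne_top
  rw [hpi, mul_one, ← ENNReal.ofReal_pow (by positivity)]
  apply ENNReal.ofReal_le_ofReal
  apply le_of_eq
  ring

/-! ### Conclusion -/

/-- The identity lies in `𝒟_*`, so its image `φ` under `C_φ` has finite Dirichlet integral. -/
lemma dirichlet_integral_lt_top {φ : ℂ → ℂ} (h0 : φ 0 = 0)
    (hc : IsBoundedOpOn MemDStar eDNormSq (compOp φ)) :
    ∫⁻ z in uD, ENNReal.ofReal (‖deriv φ z‖ ^ 2) ∂nA < ⊤ := by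
  have hid : MemDStar (fun z => z) := by
    refine ⟨⟨differentiableOn_id, ?_⟩, rfl⟩
    change eDNormSq (fun z => z) < ⊤
    rw [eDNormSq_eq _ rfl]
    simp only [deriv_id'', norm_one, one_pow, ENNReal.ofReal_one, setLIntegral_one]
    rw [nA, Measure.smul_apply, smul_eq_mul]
    exact ENNReal.mul_lt_top (ENNReal.inv_lt_top.2 (by simp [Real.pi_pos])) measure_ball_lt_top
  have h := (hc.1 _ hid).1.2
  change eDNormSq φ < ⊤ at h
  rwa [eDNormSq_eq φ h0] at h

/-- The points that `φ` maps near the circle lie so close to it that `1 - ‖z‖²` is at most any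
prescribed power of `1 - ‖φ z‖²`. -/
lemma exists_rho {φ : ℂ → ℂ} (hc : IsCompactOpOn MemDStar eDNormSq (compOp φ)) {M : ℝ}
    (hM : 0 < M) : ∃ ρ < 1, ∀ z ∈ uD, ρ < ‖φ z‖ → ‖φ z‖ < 1 →
      1 - ‖z‖ ^ 2 ≤ (1 - ‖φ z‖ ^ 2) ^ M := by
  have h := key_log φ hc (inv_pos.2 hM)
  rw [bd, eventually_comap] at h
  obtain ⟨ρ, hρ, hρs⟩ := (mem_nhdsLT_iff_exists_Ioo_subset).1 h
  refine ⟨ρ, hρ, fun z hz h1 h2 => ?_⟩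
  have h3 := hρs ⟨h1, h2⟩ (φ z) rfl z hz rfl
  have hz1 : ‖z‖ < 1 := by simpa [uD] using hz
  have p1 : 0 < 1 - ‖z‖ ^ 2 := by nlinarith [norm_nonneg z]
  have p2 : 0 < 1 - ‖φ z‖ ^ 2 := by nlinarith [norm_nonneg (φ z)]
  rw [← Real.log_le_log_iff p1 (Real.rpow_pos_of_pos p2 M), Real.log_rpow p2]
  have h4 := mul_le_mul_of_nonneg_left h3 hM.le
  rw [← mul_assoc, mul_inv_cancel₀ hM.ne', one_mul] at h4
  linarith

/- STATEMENT 7 -/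
theorem stmt7 (φ : ℂ → ℂ) (hφ : IsSchur φ) (h0 : φ 0 = 0)
    (hc : IsCompactOpOn MemDStar eDNormSq (compOp φ)) (A : ℝ) (hA : 0 < A) :
    ∀ ε : ℝ, 0 < ε → ∃ η : ℝ, 0 < η ∧ ∀ h : ℝ, 0 < h → h < η → ∀ ξ : ℂ, ‖ξ‖ = 1 →
      (∫⁻ w in carlesonW ξ h, nevanlinnaE φ 1 w ∂nA) ≤
        ENNReal.ofReal (ε * h ^ A) * nA (carlesonW ξ h) := by
  intro ε hε
  have hM : 0 < A + 3 := by linarith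
  obtain ⟨ρ, hρ1, hρ⟩ := exists_rho hc hM
  have hfin := dirichlet_integral_lt_top h0 hc.1
  set I := ∫⁻ z in uD, ENNReal.ofReal (‖deriv φ z‖ ^ 2) ∂nA
  have hI : I ≤ ENNReal.ofReal (I.toReal + 1) := by
    rw [← ENNReal.ofReal_toReal hfin.ne]
    exact ENNReal.ofReal_le_ofReal (by simp)
  have hC : 0 < I.toReal + 1 := by positivity
  set C := I.toReal + 1
  have hK : 0 < 16 * 2 ^ (A + 3) * C := by positivity
  refine ⟨min (1 / 2) (min (1 - ρ) (ε / (16 * 2 ^ (A + 3) * C))),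
    lt_min (by norm_num) (lt_min (by linarith) (by positivity)), ?_⟩
  intro h hh hlt ξ hξ
  obtain ⟨hh1, hlt⟩ := lt_min_iff.1 hlt
  obtain ⟨hh2, hh3⟩ := lt_min_iff.1 hlt
  rw [lt_div_iff₀ hK] at hh3
  have hs : ∀ z ∈ uD, φ z ∈ carlesonW ξ h →
      ENNReal.ofReal ((1 - ‖z‖ ^ 2) ^ (1 : ℝ)) ≤ ENNReal.ofReal ((2 * h) ^ (A + 3)) := by
    intro z hz hw
    have hw1 : ‖φ z‖ < 1 := by simpa [uD] using hw.1
    have hw2 : 1 - ‖φ z‖ ≤ h := hw.2.1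
    rw [Real.rpow_one]
    refine ENNReal.ofReal_le_ofReal ((hρ z hz (by linarith) hw1).trans ?_)
    refine Real.rpow_le_rpow ?_ ?_ hM.le <;> nlinarith [norm_nonneg (φ z)]
  refine (lintegral_nevanlinna_le hφ.1 (measurableSet_carlesonW ξ h) _ hs).trans ?_
  refine (mul_le_mul_right hI _).trans ?_
  refine le_trans ?_ (mul_le_mul_right (nA_carlesonW_ge hξ hh hh1.le) _)
  rw [← ENNReal.ofReal_mul (by positivity), ← ENNReal.ofReal_mul (by positivity)]
  apply ENNReal.ofReal_le_ofReal
  have e : (2 * h) ^ (A + 3) = 2 ^ (A + 3) * (h ^ A * h ^ 3) := by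
    rw [Real.mul_rpow (by norm_num) hh.le, Real.rpow_add hh]
    norm_cast
  rw [e]
  have hP : 0 < h ^ A * h ^ 2 := by positivity
  calc 2 ^ (A + 3) * (h ^ A * h ^ 3) * C
      = (h ^ A * h ^ 2) * ((h * (16 * 2 ^ (A + 3) * C)) / 16) := by ring
    _ ≤ (h ^ A * h ^ 2) * (ε / 16) := by gcongr
    _ = ε * h ^ A * (h ^ 2 / 16) := by ring

end
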